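/- arXiv:2007.00148 — 3 statements merged into one kernel-verified Lean document; each statement's English description precedes it below -/
import Mathlib

section
/- Let 𝒜 be a nonempty finite set of size A, H ≥ 0 a real number, α > 0, τ a positive integer, and Q¹,…,Q^τ : 𝒜 → ℝ functions with 0 ≤ Q^k(a) ≤ H for all k ∈ [τ] and a ∈ 𝒜. Define the exponential-weights iterates p¹,…,p^τ by p¹(a) = 1/A (the uniform pmf) and p^{k+1}(a) = p^k(a)·exp(α·Q^k(a)) / Σ_{b∈𝒜} p^k(b)·exp(α·Q^k(b)) for 1 ≤ k ≤ τ−1. Then for every pmf q on 𝒜, Σ_{k=1}^{τ} Σ_{a∈𝒜} Q^k(a)·(q(a) − p^k(a)) ≤ (1/2)·α·τ·H² + (log A)/α. -/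
/-!
It suffices to bound the regret against each fixed action `a`, because the regret is affine in the
comparator `q`. Write `⟨p, Q⟩ = ∑ b, p b * Q b`. The normalising constant satisfies
`∑ b, p b * exp (α * Q b) ≤ exp (α * ⟨p, Q⟩ + α ^ 2 * H ^ 2 / 2)` (`sum_mul_exp_le`), so each update
multiplies the weight of `a` by at least
`exp (α * (Q a - ⟨p, Q⟩) - α ^ 2 * H ^ 2 / 2)`. Since the initial weight is `1 / A` and a weight never
exceeds `1`, the sum of these exponents over all rounds is at most `log A`, which is the claim after
dividing by `α`.
-/

/-- This follows from `1 + x + x ^ 2 / 2 ≤ exp x` and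
`(1 - x + x ^ 2 / 2) * (1 + x + x ^ 2 / 2) = 1 + x ^ 4 / 4`. -/
lemma exp_neg_le_quadratic {x : ℝ} (hx : 0 ≤ x) : Real.exp (-x) ≤ 1 - x + x ^ 2 / 2 := by
  have h1 := Real.quadratic_le_exp_of_nonneg hx
  have h2 : Real.exp (-x) * Real.exp x = 1 := by rw [← Real.exp_add]; simp
  have h3 : (0 : ℝ) ≤ 1 - x + x ^ 2 / 2 := by nlinarith [sq_nonneg (x - 1)]
  have h4 : 1 ≤ (1 - x + x ^ 2 / 2) * Real.exp x := by
    nlinarith [mul_le_mul_of_nonneg_left h1 h3, sq_nonneg (x ^ 2)]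
  exact le_of_mul_le_mul_right (h2.trans_le h4) (Real.exp_pos x)

/-- A bound on the moment generating function of a random variable with values in `[0, H]`, with the
constant `1 / 2` in place of the `1 / 8` of Hoeffding's lemma. -/
lemma sum_mul_exp_le {ι : Type*} [Fintype ι] {H α : ℝ} (hα : 0 < α) {Q p : ι → ℝ}
    (hQ : ∀ a, 0 ≤ Q a ∧ Q a ≤ H) (hp : ∀ a, 0 ≤ p a) (hs : ∑ a, p a = 1) :
    ∑ a, p a * Real.exp (α * Q a) ≤
      Real.exp (α * ∑ a, p a * Q a + α ^ 2 * H ^ 2 / 2) := by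
  -- The quadratic bound needs a nonpositive exponent, so pass to the losses `H - Q a`.
  have key : ∀ a, p a * Real.exp (α * Q a) ≤
      Real.exp (α * H) * (p a * (1 - α * H + α ^ 2 * H ^ 2 / 2) + α * (p a * Q a)) := by
    intro a
    obtain ⟨h0, h1⟩ := hQ a
    have e : Real.exp (α * Q a) = Real.exp (α * H) * Real.exp (-(α * (H - Q a))) := by
      rw [← Real.exp_add]; congr 1; ring
    have hl := exp_neg_le_quadratic (mul_nonneg hα.le (sub_nonneg.2 h1))
    have hsq : (α * (H - Q a)) ^ 2 ≤ α ^ 2 * H ^ 2 := by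
      rw [mul_pow]
      exact mul_le_mul_of_nonneg_left
        (pow_le_pow_left₀ (sub_nonneg.2 h1) (by linarith) 2) (sq_nonneg α)
    have hb : Real.exp (-(α * (H - Q a))) ≤
        (1 - α * H + α ^ 2 * H ^ 2 / 2) + α * Q a := by linarith
    calc p a * Real.exp (α * Q a)
        = Real.exp (α * H) * (p a * Real.exp (-(α * (H - Q a)))) := by rw [e]; ring
      _ ≤ Real.exp (α * H) * (p a * ((1 - α * H + α ^ 2 * H ^ 2 / 2) + α * Q a)) := by
          have := hp a
          gcongr
      _ = _ := by ring
  calc ∑ a, p a * Real.exp (α * Q a)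
      ≤ ∑ a, Real.exp (α * H) *
          (p a * (1 - α * H + α ^ 2 * H ^ 2 / 2) + α * (p a * Q a)) :=
        Finset.sum_le_sum fun a _ => key a
    _ = Real.exp (α * H) *
          ((-(α * H) + α ^ 2 * H ^ 2 / 2 + α * ∑ a, p a * Q a) + 1) := by
        rw [← Finset.mul_sum, Finset.sum_add_distrib, ← Finset.sum_mul, hs, ← Finset.mul_sum]
        ring
    _ ≤ Real.exp (α * H) *
          Real.exp (-(α * H) + α ^ 2 * H ^ 2 / 2 + α * ∑ a, p a * Q a) := by
        gcongr
        exact Real.add_one_le_exp _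
    _ = _ := by rw [← Real.exp_add]; congr 1; ring


/-- Static regret bound for exponential weights (mirror descent with KL
divergence) started from the uniform distribution. -/
theorem exp_weights_static_regret {𝒜 : Type*} [Fintype 𝒜] [Nonempty 𝒜]
    (A : ℕ) (hA : Fintype.card 𝒜 = A)
    (H α : ℝ) (hH : 0 ≤ H) (hα : 0 < α)
    (τ : ℕ) (hτ : 0 < τ)
    (Q : ℕ → 𝒜 → ℝ)
    (hQ : ∀ k ∈ Finset.Icc 1 τ, ∀ a, 0 ≤ Q k a ∧ Q k a ≤ H)
    (p : ℕ → 𝒜 → ℝ)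
    (hp1 : ∀ a, p 1 a = 1 / (A : ℝ))
    (hrec : ∀ k, 1 ≤ k → k ≤ τ - 1 → ∀ a,
      p (k + 1) a =
        p k a * Real.exp (α * Q k a) / ∑ b, p k b * Real.exp (α * Q k b))
    (q : 𝒜 → ℝ) (hq_nonneg : ∀ a, 0 ≤ q a) (hq_sum : ∑ a, q a = 1) :
    ∑ k ∈ Finset.Icc 1 τ, ∑ a, Q k a * (q a - p k a) ≤
      (1 / 2) * α * τ * H ^ 2 + Real.log A / α := by
  have hA0 : (0 : ℝ) < A := by
    rw [← hA]; exact_mod_cast Fintype.card_pos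
  -- `g j a` is the lower bound on the increment of `log (p j a)`.
  set g : ℕ → 𝒜 → ℝ := fun j a =>
    α * Q j a - (α * ∑ b, p j b * Q j b + α ^ 2 * H ^ 2 / 2) with hg
  have inv : ∀ n, n < τ → (∀ a, 0 < p (n + 1) a) ∧ ∑ a, p (n + 1) a = 1 ∧
      ∀ a, 1 / (A : ℝ) * Real.exp (∑ j ∈ Finset.Icc 1 n, g j a) ≤ p (n + 1) a := by
    intro n
    induction n with
    | zero =>
      intro _
      refine ⟨fun a => ?_, ?_, fun a => ?_⟩
      · rw [zero_add, hp1]; positivity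
      · simp [hp1, hA, hA0.ne']
      · simp [hp1]
    | succ n ih =>
      intro hn
      obtain ⟨hpos, hsum, hlow⟩ := ih (by omega)
      have hr := hrec (n + 1) (by omega) (by omega)
      have hZ : 0 < ∑ b, p (n + 1) b * Real.exp (α * Q (n + 1) b) :=
        Finset.sum_pos (fun b _ => mul_pos (hpos b) (Real.exp_pos _)) Finset.univ_nonempty
      have hZle := sum_mul_exp_le hα (hQ (n + 1) (Finset.mem_Icc.2 ⟨by omega, by omega⟩))
        (fun a => (hpos a).le) hsum
      refine ⟨fun a => ?_, ?_, fun a => ?_⟩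
      · rw [hr]; exact div_pos (mul_pos (hpos a) (Real.exp_pos _)) hZ
      · simp_rw [hr]
        rw [← Finset.sum_div, div_self hZ.ne']
      · rw [hr, Finset.sum_Icc_succ_top (by omega), Real.exp_add, le_div_iff₀ hZ]
        calc 1 / (A : ℝ) * (Real.exp (∑ j ∈ Finset.Icc 1 n, g j a) * Real.exp (g (n + 1) a)) *
              ∑ b, p (n + 1) b * Real.exp (α * Q (n + 1) b)
            = (1 / (A : ℝ) * Real.exp (∑ j ∈ Finset.Icc 1 n, g j a)) * (Real.exp (g (n + 1) a) *
              ∑ b, p (n + 1) b * Real.exp (α * Q (n + 1) b)) := by ring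
          _ ≤ p (n + 1) a * (Real.exp (g (n + 1) a) * Real.exp
              (α * ∑ b, p (n + 1) b * Q (n + 1) b + α ^ 2 * H ^ 2 / 2)) := by
              have := (hpos a).le
              have := hlow a
              gcongr
          _ = p (n + 1) a * Real.exp (α * Q (n + 1) a) := by
              rw [← Real.exp_add]; simp [hg]
  -- The iterate `p (τ + 1)` is not constrained, so the last round compares one term of the
  -- normalising constant with the whole sum.
  have hreg : ∀ a, ∑ j ∈ Finset.Icc 1 τ, g j a ≤ Real.log A := by
    intro a
    obtain ⟨n, rfl⟩ : ∃ n, τ = n + 1 := ⟨τ - 1, by omega⟩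
    obtain ⟨hpos, hsum, hlow⟩ := inv n (by omega)
    have hZle := sum_mul_exp_le hα (hQ (n + 1) (Finset.mem_Icc.2 ⟨by omega, le_rfl⟩))
      (fun a => (hpos a).le) hsum
    have hterm : p (n + 1) a * Real.exp (α * Q (n + 1) a) ≤ _ :=
      (Finset.single_le_sum (f := fun b => p (n + 1) b * Real.exp (α * Q (n + 1) b))
        (fun b _ => (mul_pos (hpos b) (Real.exp_pos _)).le) (Finset.mem_univ a)).trans hZle
    have h1 : p (n + 1) a * Real.exp (g (n + 1) a) ≤ 1 := by
      simp only [hg]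
      rwa [Real.exp_sub, ← mul_div_assoc, div_le_one (Real.exp_pos _)]
    have h2 : 1 / (A : ℝ) * Real.exp (∑ j ∈ Finset.Icc 1 (n + 1), g j a) ≤ 1 := by
      rw [Finset.sum_Icc_succ_top (by omega), Real.exp_add, ← mul_assoc]
      exact (mul_le_mul_of_nonneg_right (hlow a) (Real.exp_pos _).le).trans h1
    rw [Real.le_log_iff_exp_le hA0]
    rwa [one_div_mul_eq_div, div_le_one hA0] at h2
  have havg : ∑ a, q a * ∑ j ∈ Finset.Icc 1 τ, g j a ≤ Real.log A := by
    calc ∑ a, q a * ∑ j ∈ Finset.Icc 1 τ, g j a ≤ ∑ a, q a * Real.log A :=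
          Finset.sum_le_sum fun a _ => mul_le_mul_of_nonneg_left (hreg a) (hq_nonneg a)
      _ = Real.log A := by rw [← Finset.sum_mul, hq_sum, one_mul]
  have hround : ∀ j, ∑ a, q a * g j a =
      α * ∑ a, Q j a * (q a - p j a) - α ^ 2 * H ^ 2 / 2 := by
    intro j
    simp only [hg, mul_sub, Finset.sum_sub_distrib]
    rw [← Finset.sum_mul, hq_sum, one_mul, Finset.mul_sum, Finset.mul_sum, Finset.mul_sum,
      ← sub_sub]
    congr 2 <;> exact Finset.sum_congr rfl fun a _ => by ring
  have heq : ∑ a, q a * ∑ j ∈ Finset.Icc 1 τ, g j a =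
      α * ∑ k ∈ Finset.Icc 1 τ, ∑ a, Q k a * (q a - p k a) - τ * (α ^ 2 * H ^ 2 / 2) := by
    simp_rw [Finset.mul_sum (Finset.Icc 1 τ)]
    rw [Finset.sum_comm]
    simp_rw [hround]
    rw [Finset.sum_sub_distrib, ← Finset.mul_sum]
    simp
  rw [heq] at havg
  rw [← sub_le_iff_le_add', le_div_iff₀ hα]
  linarith
end

section
/- Let d, K be positive integers, λ ≥ 1, and for each k ∈ [K] let φ_k ∈ ℝ^d with ‖φ_k‖₂ ≤ 1. Define Λ_k = λ·I_d + Σ_{t=1}^{k−1} φ_t φ_tᵀ for k ∈ [K]. Then Σ_{k=1}^{K} φ_kᵀ Λ_k^{−1} φ_k ≤ 2d·log((K + λ)/λ). -/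
/-!
The potential is compared with the growth of the log-determinant. Adding `φ φᵀ` to a positive
definite `A` multiplies `det A` by `1 + x`, where `x = φᵀ A⁻¹ φ`. Since `A ≥ I` and `‖φ‖ ≤ 1`,
we have `0 ≤ x ≤ 1` (`quadForm_inv_mem`), hence `x ≤ 2 log (1 + x)`, and the sum telescopes to
`2 (log det Λ_{K+1} - d log λ)` (`sum_le_log_det`).

The determinant is bounded by the trace: for any `c > 0`, applying `log μ ≤ μ / c - 1 + log c`
to every eigenvalue `μ` of a positive definite `A` gives
`log det A ≤ tr A / c - d + d log c` (`log_det_le`). With `c = K + λ` and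
`tr Λ_{K+1} ≤ d λ + K ≤ d c` this is at most `d log (K + λ)`.
-/

open Matrix

/-- The regularized Gram matrix of `φ 1, …, φ n`; with the indexing of the theorem it is
`Λ (n + 1)`. -/
def gramReg {d : ℕ} (lam : ℝ) (φ : ℕ → Fin d → ℝ) (n : ℕ) : Matrix (Fin d) (Fin d) ℝ :=
  lam • (1 : Matrix (Fin d) (Fin d) ℝ) + ∑ t ∈ Finset.Icc 1 n, vecMulVec (φ t) (φ t)

lemma gramReg_succ {d : ℕ} (lam : ℝ) (φ : ℕ → Fin d → ℝ) (n : ℕ) :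
    gramReg lam φ (n + 1) = gramReg lam φ n + vecMulVec (φ (n + 1)) (φ (n + 1)) := by
  rw [gramReg, gramReg, Finset.sum_Icc_succ_top (by omega), add_assoc]

lemma posSemidef_sum_vecMulVec {d : ℕ} (φ : ℕ → Fin d → ℝ) (s : Finset ℕ) :
    (∑ t ∈ s, vecMulVec (φ t) (φ t)).PosSemidef :=
  Matrix.posSemidef_sum s fun t _ => by
    simpa using Matrix.posSemidef_vecMulVec_self_star (φ t)

lemma gramReg_posDef {d : ℕ} {lam : ℝ} (hlam : 1 ≤ lam) (φ : ℕ → Fin d → ℝ) (n : ℕ) :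
    (gramReg lam φ n).PosDef :=
  (Matrix.PosDef.one.smul (by linarith)).add_posSemidef (posSemidef_sum_vecMulVec φ _)

lemma dotProduct_self_le_gramReg {d : ℕ} {lam : ℝ} (hlam : 1 ≤ lam) (φ : ℕ → Fin d → ℝ) (n : ℕ)
    (v : Fin d → ℝ) : v ⬝ᵥ v ≤ v ⬝ᵥ (gramReg lam φ n *ᵥ v) := by
  have h := (posSemidef_sum_vecMulVec φ (Finset.Icc 1 n)).dotProduct_mulVec_nonneg v
  have hv : 0 ≤ v ⬝ᵥ v := by simpa using dotProduct_star_self_nonneg v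
  simp only [star_trivial] at h
  rw [gramReg, add_mulVec, dotProduct_add, smul_mulVec, one_mulVec, dotProduct_smul, smul_eq_mul]
  nlinarith

/-- If `A ≥ I` and `‖u‖ ≤ 1` then `uᵀ A⁻¹ u ∈ [0, 1]`: with `v = A⁻¹ u` and `s = u ⬝ v`,
one has `‖v‖² ≤ vᵀ A v = s` and, by Cauchy–Schwarz, `s² ≤ ‖u‖² ‖v‖² ≤ s`. -/
lemma quadForm_inv_mem {d : ℕ} {A : Matrix (Fin d) (Fin d) ℝ} (hA : A.PosDef)
    (hAI : ∀ v, v ⬝ᵥ v ≤ v ⬝ᵥ (A *ᵥ v)) {u : Fin d → ℝ} (hu : u ⬝ᵥ u ≤ 1) :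
    0 ≤ u ⬝ᵥ (A⁻¹ *ᵥ u) ∧ u ⬝ᵥ (A⁻¹ *ᵥ u) ≤ 1 := by
  have hdet : IsUnit A.det := hA.det_pos.ne'.isUnit
  have h := hAI (A⁻¹ *ᵥ u)
  rw [mulVec_mulVec, mul_nonsing_inv _ hdet, one_mulVec, dotProduct_comm _ u] at h
  have hv : 0 ≤ (A⁻¹ *ᵥ u) ⬝ᵥ (A⁻¹ *ᵥ u) := by
    simpa using dotProduct_star_self_nonneg (A⁻¹ *ᵥ u)
  have hcs : (u ⬝ᵥ (A⁻¹ *ᵥ u)) ^ 2 ≤ (u ⬝ᵥ u) * ((A⁻¹ *ᵥ u) ⬝ᵥ (A⁻¹ *ᵥ u)) := by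
    have := Finset.sum_mul_sq_le_sq_mul_sq Finset.univ u (A⁻¹ *ᵥ u)
    simpa only [dotProduct, sq] using this
  generalize u ⬝ᵥ (A⁻¹ *ᵥ u) = s at *
  generalize (A⁻¹ *ᵥ u) ⬝ᵥ (A⁻¹ *ᵥ u) = w at *
  refine ⟨hv.trans h, ?_⟩
  nlinarith [mul_le_mul_of_nonneg_right hu hv]

/-- The matrix determinant lemma for a rank-one symmetric update. -/
lemma det_add_vecMulVec_self {d : ℕ} {A : Matrix (Fin d) (Fin d) ℝ} (hA : A.PosDef)
    (u : Fin d → ℝ) :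
    (A + vecMulVec u u).det = A.det * (1 + u ⬝ᵥ (A⁻¹ *ᵥ u)) := by
  rw [vecMulVec_eq Unit, det_add_replicateCol_mul_replicateRow hA.det_pos.ne'.isUnit, det_unique (n := Unit),
    Matrix.mul_assoc, ← replicateCol_mulVec]
  simp [Matrix.mul_apply, dotProduct]

lemma le_two_mul_log {x : ℝ} (h0 : 0 ≤ x) (h1 : x ≤ 1) : x ≤ 2 * Real.log (1 + x) := by
  have h := Real.one_sub_inv_le_log_of_pos (show 0 < 1 + x by linarith)
  have h2 : x / 2 ≤ 1 - (1 + x)⁻¹ := by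
    have : 1 - (1 + x)⁻¹ = x / (1 + x) := by field_simp; ring
    rw [this]
    exact div_le_div_of_nonneg_left h0 (by linarith) (by linarith)
  linarith

lemma sum_le_log_det {d : ℕ} {lam : ℝ} (hlam : 1 ≤ lam) (φ : ℕ → Fin d → ℝ) (n : ℕ)
    (hφ : ∀ k ∈ Finset.Icc 1 n, φ k ⬝ᵥ φ k ≤ 1) :
    ∑ k ∈ Finset.Icc 1 n, φ k ⬝ᵥ ((gramReg lam φ (k - 1))⁻¹ *ᵥ φ k) ≤
      2 * (Real.log (gramReg lam φ n).det - d * Real.log lam) := by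
  induction n with
  | zero => simp [gramReg]
  | succ n ih =>
    have hA := gramReg_posDef hlam φ n
    obtain ⟨h0, h1⟩ := quadForm_inv_mem hA (dotProduct_self_le_gramReg hlam φ n)
      (hφ (n + 1) (by simp))
    have ih := ih fun k hk => hφ k (by simp only [Finset.mem_Icc] at hk ⊢; omega)
    have hlog := le_two_mul_log h0 h1
    rw [Finset.sum_Icc_succ_top (by omega), Nat.add_sub_cancel, gramReg_succ,
      det_add_vecMulVec_self hA, Real.log_mul hA.det_pos.ne' (by positivity)]
    linarith

/-- A form of the AM–GM inequality `det A ≤ (tr A / d) ^ d`, linearized at `c`. -/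
lemma log_det_le {d : ℕ} {A : Matrix (Fin d) (Fin d) ℝ} (hA : A.PosDef) {c : ℝ} (hc : 0 < c) :
    Real.log A.det ≤ A.trace / c - d + d * Real.log c := by
  have hpos := hA.eigenvalues_pos
  have hdet : A.det = ∏ i, hA.isHermitian.eigenvalues i := by
    simpa using hA.isHermitian.det_eq_prod_eigenvalues
  have htr : A.trace = ∑ i, hA.isHermitian.eigenvalues i := by
    simpa using hA.isHermitian.trace_eq_sum_eigenvalues
  rw [hdet, htr, Real.log_prod fun i _ => (hpos i).ne']
  calc ∑ i, Real.log (hA.isHermitian.eigenvalues i)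
      ≤ ∑ i, (hA.isHermitian.eigenvalues i / c - 1 + Real.log c) := by
        refine Finset.sum_le_sum fun i _ => ?_
        have h := Real.log_le_sub_one_of_pos (div_pos (hpos i) hc)
        rw [Real.log_div (hpos i).ne' hc.ne'] at h
        linarith
    _ = _ := by simp [Finset.sum_add_distrib, Finset.sum_sub_distrib, Finset.sum_div]

lemma trace_gramReg_le {d : ℕ} (lam : ℝ) (φ : ℕ → Fin d → ℝ) (n : ℕ)
    (hφ : ∀ k ∈ Finset.Icc 1 n, φ k ⬝ᵥ φ k ≤ 1) : (gramReg lam φ n).trace ≤ d * lam + n := by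
  have h := Finset.sum_le_sum hφ
  simp only [Finset.sum_const, Nat.card_Icc, Nat.add_sub_cancel, nsmul_eq_mul, mul_one] at h
  simp only [gramReg, trace_add, trace_smul, trace_one, trace_sum, trace_vecMulVec,
    Fintype.card_fin, smul_eq_mul]
  linarith

/-- Bound on the accumulated elliptical potential: with `Λₖ = λ I +
∑_{t<k} φₜ φₜᵀ` and unit-norm vectors, `∑ₖ φₖᵀ Λₖ⁻¹ φₖ ≤ 2 d log((K+λ)/λ)`. -/
theorem elliptical_potential_sum_bound
    (d K : ℕ) (hd : 0 < d) (hK : 0 < K)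
    (lam : ℝ) (hlam : 1 ≤ lam)
    (φ : ℕ → Fin d → ℝ)
    (hφ : ∀ k ∈ Finset.Icc 1 K, Real.sqrt (∑ j, φ k j ^ 2) ≤ 1)
    (Λ : ℕ → Matrix (Fin d) (Fin d) ℝ)
    (hΛ : ∀ k ∈ Finset.Icc 1 K,
      Λ k = lam • (1 : Matrix (Fin d) (Fin d) ℝ) +
        ∑ t ∈ Finset.Icc 1 (k - 1), vecMulVec (φ t) (φ t)) :
    ∑ k ∈ Finset.Icc 1 K, φ k ⬝ᵥ ((Λ k)⁻¹ *ᵥ φ k) ≤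
      2 * d * Real.log ((K + lam) / lam) := by
  have hφ' : ∀ k ∈ Finset.Icc 1 K, φ k ⬝ᵥ φ k ≤ 1 := fun k hk => by
    simpa only [dotProduct, sq, one_mul] using (Real.sqrt_le_iff.mp (hφ k hk)).2
  have hsum : ∑ k ∈ Finset.Icc 1 K, φ k ⬝ᵥ ((Λ k)⁻¹ *ᵥ φ k) =
      ∑ k ∈ Finset.Icc 1 K, φ k ⬝ᵥ ((gramReg lam φ (k - 1))⁻¹ *ᵥ φ k) :=
    Finset.sum_congr rfl fun k hk => by rw [hΛ k hk, gramReg]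
  have hlam0 : 0 < lam := by linarith
  have hc : 0 < (K : ℝ) + lam := by positivity
  have hd1 : (1 : ℝ) ≤ d := by exact_mod_cast hd
  have htr : (gramReg lam φ K).trace / (K + lam) ≤ d := by
    rw [div_le_iff₀ hc]
    nlinarith [trace_gramReg_le lam φ K hφ', (Nat.cast_nonneg K : (0 : ℝ) ≤ K)]
  have h1 := sum_le_log_det hlam φ K hφ'
  have h2 := log_det_le (gramReg_posDef hlam φ K) hc
  rw [hsum, Real.log_div hc.ne' hlam0.ne']
  linarith
end

section
/- Fix finite sets S (states) and 𝒜 (actions), a horizon H ∈ ℕ, transition kernels {P_h}_{h∈[H]} and reward functions r_h : S × 𝒜 → ℝ. Let π be a policy, let Q_h : S × 𝒜 → ℝ (h ∈ [H]) be arbitrary functions, define V_{H+1} ≡ 0 and V_h(s) = Σ_{a} π_h(a|s)·Q_h(s,a) for h ∈ [H], and define the model prediction error ι_h(s,a) = r_h(s,a) + Σ_{s'} P_h(s'|s,a)·V_{h+1}(s') − Q_h(s,a). Then for every initial state s₁ ∈ S, V_1(s₁) − V^π_1(s₁) = − Σ_{h=1}^{H} E_π[ ι_h(s_h, a_h) |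 s_1 = s₁ ]. -/
/-!
The gap `V_h - V^π_h` satisfies a Bellman-type recursion: since both functions average over the same
policy `π`, subtracting their defining equations gives
`V_h - V^π_h = -∑ₐ π_h ι_h + P_h^π (V_{h+1} - V^π_{h+1})` (`value_gap_step`). Averaging this over the
visitation distribution at step `h` turns the last term into the average of the next gap over the
visitation distribution at step `h + 1`, so the identity telescopes (`value_gap_telescope`). The
residual term after `H` steps vanishes because both value functions are zero at step `H + 1`.
-/

/-- `visit P π s₁ n` is the visitation distribution of `s_{n+1}` under
policy `π` started at `s₁`, i.e. `μ_{n+1}^π(·|s₁)`: the point mass at `s₁`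
for `n = 0`, then pushed forward one step at a time by the one-step kernels
`P_h^π(s'|s) = ∑ₐ P_h(s'|s,a) π_h(a|s)`. -/
noncomputable def visit {S 𝒜 : Type*} [Fintype S] [Fintype 𝒜] [DecidableEq S]
    (P : ℕ → S → 𝒜 → S → ℝ) (π : ℕ → S → 𝒜 → ℝ) (s₁ : S) : ℕ → S → ℝ
  | 0 => fun s => if s = s₁ then 1 else 0
  | n + 1 => fun s' =>
      ∑ s, visit P π s₁ n s * ∑ a, P (n + 1) s a s' * π (n + 1) s a

/-- `Vpol P r π n h s` is the value function `V^π_h(s)` computed with `n`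
remaining steps: `V^π_{H+1} ≡ 0` corresponds to `n = 0`, and
`V^π_h(s) = ∑ₐ π_h(a|s) (r_h(s,a) + ∑_{s'} P_h(s'|s,a) V^π_{h+1}(s'))`
corresponds to `n = H + 1 - h`. -/
noncomputable def Vpol {S 𝒜 : Type*} [Fintype S] [Fintype 𝒜]
    (P : ℕ → S → 𝒜 → S → ℝ) (r : ℕ → S → 𝒜 → ℝ) (π : ℕ → S → 𝒜 → ℝ) :
    ℕ → ℕ → S → ℝ
  | 0, _, _ => 0
  | n + 1, h, s =>
      ∑ a, π h s a * (r h s a + ∑ s', P h s a s' * Vpol P r π n (h + 1) s')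

/-- Bellman recursion for the gap between `V` and `V^π`, with `m + 1` steps remaining. The functions
`W` and `W'` play the roles of `V_h` and `V_{h+1}`. -/
theorem value_gap_step {S 𝒜 : Type*} [Fintype S] [Fintype 𝒜]
    (P : ℕ → S → 𝒜 → S → ℝ) (r π Q ι : ℕ → S → 𝒜 → ℝ) (W W' : S → ℝ) (m h : ℕ) (s : S)
    (hW : W s = ∑ a, π h s a * Q h s a)
    (hι : ∀ a, ι h s a = r h s a + (∑ s', P h s a s' * W' s') - Q h s a) :
    W s - Vpol P r π (m + 1) h s =
      -(∑ a, π h s a * ι h s a) +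
        ∑ s', (∑ a, P h s a s' * π h s a) * (W' s' - Vpol P r π m (h + 1) s') := by
  have key : ∑ s', (∑ a, P h s a s' * π h s a) * (W' s' - Vpol P r π m (h + 1) s') =
      ∑ a, π h s a * (∑ s', P h s a s' * W' s' - ∑ s', P h s a s' * Vpol P r π m (h + 1) s') := by
    simp_rw [Finset.sum_mul]
    rw [Finset.sum_comm]
    refine Finset.sum_congr rfl fun a _ => ?_
    rw [← Finset.sum_sub_distrib, Finset.mul_sum]
    exact Finset.sum_congr rfl fun s' _ => by ring
  rw [key, hW, Vpol, ← Finset.sum_sub_distrib, ← Finset.sum_neg_distrib, ← Finset.sum_add_distrib]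
  refine Finset.sum_congr rfl fun a _ => ?_
  rw [hι a]
  ring

/-- Unrolling the gap recursion `k` steps from `s₁`: what remains is the gap at step `k + 1`,
averaged over the visitation distribution `μ_{k+1}^π`, which is `visit P π s₁ k`. -/
theorem value_gap_telescope {S 𝒜 : Type*} [Fintype S] [Fintype 𝒜] [DecidableEq S]
    (H : ℕ) (P : ℕ → S → 𝒜 → S → ℝ) (r π Q ι : ℕ → S → 𝒜 → ℝ) (V : ℕ → S → ℝ)
    (hV : ∀ h ∈ Finset.Icc 1 H, ∀ s, V h s = ∑ a, π h s a * Q h s a)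
    (hι : ∀ h ∈ Finset.Icc 1 H, ∀ s a,
      ι h s a = r h s a + (∑ s', P h s a s' * V (h + 1) s') - Q h s a)
    (s₁ : S) (k : ℕ) (hk : k ≤ H) :
    V 1 s₁ - Vpol P r π H 1 s₁ =
      -(∑ h ∈ Finset.Icc 1 k, ∑ s, visit P π s₁ (h - 1) s * ∑ a, π h s a * ι h s a) +
        ∑ s, visit P π s₁ k s * (V (k + 1) s - Vpol P r π (H - k) (k + 1) s) := by
  induction k with
  | zero => simp [visit]
  | succ k ih =>
    have hmem : k + 1 ∈ Finset.Icc 1 H := Finset.mem_Icc.2 ⟨by omega, hk⟩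
    have hsub : H - k = (H - (k + 1)) + 1 := by omega
    have step : ∑ s, visit P π s₁ k s * (V (k + 1) s - Vpol P r π (H - k) (k + 1) s) =
        -(∑ s, visit P π s₁ k s * ∑ a, π (k + 1) s a * ι (k + 1) s a) +
          ∑ s, visit P π s₁ (k + 1) s *
            (V (k + 1 + 1) s - Vpol P r π (H - (k + 1)) (k + 1 + 1) s) := by
      simp_rw [hsub, fun s => value_gap_step P r π Q ι (V (k + 1)) (V (k + 1 + 1)) (H - (k + 1))
        (k + 1) s (hV _ hmem s) (hι _ hmem s), mul_add, mul_neg, Finset.sum_add_distrib,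
        Finset.sum_neg_distrib]
      congr 1
      simp only [visit]
      simp_rw [Finset.mul_sum (Finset.univ : Finset S)]
      rw [Finset.sum_comm]
      refine Finset.sum_congr rfl fun s' _ => ?_
      rw [Finset.sum_mul]
      exact Finset.sum_congr rfl fun s _ => by ring
    rw [ih (by omega), step, Finset.sum_Icc_succ_top (by omega), Nat.add_sub_cancel]
    ring

/-- Regret decomposition, executed-policy part (part of Lemma 4.2 of
Cai et al., as used in the paper's dynamic regret decomposition):
`V_1(s₁) − V^π_1(s₁)` equals minus the expected model prediction error
under the executed policy `π`. -/
theorem value_difference_decomposition_executed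
    {S 𝒜 : Type*} [Fintype S] [Fintype 𝒜] [Nonempty S] [Nonempty 𝒜]
    [DecidableEq S]
    (H : ℕ)
    (P : ℕ → S → 𝒜 → S → ℝ)
    (hP_nonneg : ∀ h ∈ Finset.Icc 1 H, ∀ s a s', 0 ≤ P h s a s')
    (hP_sum : ∀ h ∈ Finset.Icc 1 H, ∀ s a, ∑ s', P h s a s' = 1)
    (r : ℕ → S → 𝒜 → ℝ)
    (π : ℕ → S → 𝒜 → ℝ)
    (hπ_nonneg : ∀ h ∈ Finset.Icc 1 H, ∀ s a, 0 ≤ π h s a)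
    (hπ_sum : ∀ h ∈ Finset.Icc 1 H, ∀ s, ∑ a, π h s a = 1)
    (Q : ℕ → S → 𝒜 → ℝ)
    (V : ℕ → S → ℝ)
    (hV_end : ∀ s, V (H + 1) s = 0)
    (hV : ∀ h ∈ Finset.Icc 1 H, ∀ s, V h s = ∑ a, π h s a * Q h s a)
    (ι : ℕ → S → 𝒜 → ℝ)
    (hι : ∀ h ∈ Finset.Icc 1 H, ∀ s a,
      ι h s a = r h s a + (∑ s', P h s a s' * V (h + 1) s') - Q h s a)
    (s₁ : S) :
    V 1 s₁ - Vpol P r π H 1 s₁ =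
      -∑ h ∈ Finset.Icc 1 H, ∑ s, visit P π s₁ (h - 1) s *
        ∑ a, π h s a * ι h s a := by
  rw [value_gap_telescope H P r π Q ι V hV hι s₁ H le_rfl]
  simp [Vpol, hV_end]
end
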